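/- Let T > 0, ℓ > 0, and let a, f be continuous on [0,T]×[−ℓ,ℓ]×ℝ×ℝ and b(·,±ℓ,·,·), g(·,±ℓ,·,·) continuous on [0,T]×ℝ×ℝ with a > 0 and b(·,±ℓ,·,·) > 0. Let u⁰ be Lipschitz on [−ℓ,ℓ] with constant K, let M > 0, q₀ ≥ K, and ψ ∈ C¹([0,∞),[1,∞)) with ∫_{q₀}^{∞} ρ/ψ(ρ) dρ > 2M; assume |f(t,x,z,p)| ≤ a(t,x,z,p)ψ(|p|) for (t,x) ∈ closure(Ω_T), z ∈ [−M,M], p ∈ ℝ, and ±g(t,ℓ,z,±p) ≤ b(t,ℓ,z,±p)·p, ∓g(t,−ℓ,z,±p) ≤ b(t,−ℓ,z,±p)·p for t ∈ (0,T], z ∈ [−M,M], p ≥ q₀. Choose q₁ > q₀ with ∫_{q₀}^{q₁} ρ/ψ(ρ) dρ = 2M, set κ₀ := ∫_{q₀}^{q₁} dρ/ψ(ρ), let q : [0,κ₀] → [q₀,q₁] be the inverse of ξ ↦ ∫_ξ^{q₁} dρ/ψ(ρ), and set h(ξ) := ∫_{q(ξ)}^{q₁} ρ/ψ(ρ) dρ.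 Then for every τ ≤ T and every classical solution u of (1),(2) on Ω_τ with u(0,·) = u⁰ and sup_{Ω_τ}|u| ≤ M, one has |u(t,x) − u(t,y)| ≤ h(|x−y|) for all t ∈ [0,τ] and all x,y ∈ [−ℓ,ℓ] with |x−y| ≤ κ₀; consequently |u_x(t,x)| ≤ h'(0) = q₁ for all (t,x) ∈ Ω_τ. -/

import Mathlib

/-!
The proof doubles the space variable. Put `v(t,x,y) = u(t,x) - u(t,y) - h(x-y)` on the set
`0 ≤ x - y ≤ κ₀`. Since `q₀ s ≤ h(s)`, `h(0) = 0` and `h(κ₀) = 2M`, one has `v ≤ 0` at `t = 0`,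
on the diagonal and on `x - y = κ₀`. If `v - εt` had a positive maximum over `[0,t₁]`, it would
be attained at some `(t,x,y)` with `t > 0` and `0 < x - y < κ₀`, where `u_t(t,x) - u_t(t,y) ≥ ε`.
At this point the conditions in `x` and in `y` decouple:

* if `x < ℓ`, then `u_x = q(x-y)` and `u_xx ≤ h'' = -ψ(u_x)` at `x`, so `|f| ≤ aψ` gives
  `u_t(t,x) ≤ 0`; if `x = ℓ`, then `u_x ≥ q(x-y) ≥ q₀` and the boundary condition gives the same;
* symmetrically `u_t(t,y) ≥ 0`.

This contradicts `ε > 0`. The hypotheses used (`DiffIneq` below) are invariant under `u ↦ -u`,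
which yields the estimate for the absolute value. The gradient bound then follows from
`h(s) ≤ q₁ s`.
-/

open Set Filter MeasureTheory
open scoped Topology

noncomputable section

/-- The time derivative `u_t` of a function `u = u(t,x)`. -/
def timeDeriv (u : ℝ → ℝ → ℝ) (t x : ℝ) : ℝ := deriv (fun s => u s x) t

/-- The spatial derivative `u_x` of a function `u = u(t,x)`. -/
def spaceDeriv (u : ℝ → ℝ → ℝ) (t x : ℝ) : ℝ := deriv (fun y => u t y) x

/-- The second spatial derivative `u_{xx}` of a function `u = u(t,x)`. -/
def spaceDeriv2 (u : ℝ → ℝ → ℝ) (t x : ℝ) : ℝ := deriv (fun y => spaceDeriv u t y) x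

/-- `v` is uniformly `β`-Hölder continuous on `I` with constant `C`. -/
def HolderBnd (β : ℝ) (I : Set ℝ) (v : ℝ → ℝ) (C : ℝ) : Prop :=
  ∀ s ∈ I, ∀ s' ∈ I, |v s - v s'| ≤ C * |s - s'| ^ β

/-- The `β`-Hölder seminorm `[v]^{(β)}_I`. -/
def hSemi (β : ℝ) (I : Set ℝ) (v : ℝ → ℝ) : ℝ :=
  sSup ((fun p : ℝ × ℝ => |v p.1 - v p.2| / |p.1 - p.2| ^ β) ''
    {p : ℝ × ℝ | p.1 ∈ I ∧ p.2 ∈ I ∧ p.1 ≠ p.2})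

/-- The sup-norm of `v` on `I`. -/
def supI (I : Set ℝ) (v : ℝ → ℝ) : ℝ := sSup ((fun s => |v s|) '' I)

/-- The `C^β` norm `|v|^{(β)}_I`. -/
def hNorm (β : ℝ) (I : Set ℝ) (v : ℝ → ℝ) : ℝ := supI I v + hSemi β I v

/-- The sup-norm of `w` on `(0,τ) × Q`. -/
def supN (τ : ℝ) (Q : Set ℝ) (w : ℝ → ℝ → ℝ) : ℝ :=
  sSup ((fun p : ℝ × ℝ => |w p.1 p.2|) '' (Ioo 0 τ ×ˢ Q))

/-- The parabolic Hölder seminorm `⟨w⟩^{(β/2,β)}_{(0,τ)×Q}`. -/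
def pSemi (β τ : ℝ) (Q : Set ℝ) (w : ℝ → ℝ → ℝ) : ℝ :=
  sSup ((fun x => hSemi (β / 2) (Ioo 0 τ) (fun t => w t x)) '' Q) +
    sSup ((fun t => hSemi β Q (fun x => w t x)) '' (Ioo 0 τ))

/-- Componentwise bound `C` for the parabolic Hölder seminorm `⟨w⟩^{(β/2,β)}_{(0,τ)×Q}`. -/
def PHolderBnd (β τ : ℝ) (Q : Set ℝ) (w : ℝ → ℝ → ℝ) (C : ℝ) : Prop :=
  (∀ x ∈ Q, HolderBnd (β / 2) (Ioo 0 τ) (fun t => w t x) C) ∧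
    ∀ t ∈ Ioo (0 : ℝ) τ, HolderBnd β Q (fun x => w t x) C

/-- The norm `|w|^{(β/2,β)}_{(0,τ)×Q}`. -/
def pNorm0 (β τ : ℝ) (Q : Set ℝ) (w : ℝ → ℝ → ℝ) : ℝ := supN τ Q w + pSemi β τ Q w

/-- The leading parabolic seminorm `⟨u⟩^{(1+α/2,2+α)}_{(0,τ)×Q}`. -/
def pSemi2 (α τ : ℝ) (Q : Set ℝ) (u : ℝ → ℝ → ℝ) : ℝ :=
  pSemi α τ Q (timeDeriv u) + pSemi α τ Q (spaceDeriv2 u) +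
    sSup ((fun x => hSemi ((1 + α) / 2) (Ioo 0 τ) (fun t => spaceDeriv u t x)) '' Q)

/-- The parabolic Hölder norm `|u|^{(1+α/2,2+α)}_{(0,τ)×Q}`. -/
def pNorm2 (α τ : ℝ) (Q : Set ℝ) (u : ℝ → ℝ → ℝ) : ℝ :=
  supN τ Q u + supN τ Q (timeDeriv u) + supN τ Q (spaceDeriv u) +
    supN τ Q (spaceDeriv2 u) + pSemi2 α τ Q u

/-- `C^{1,2}`-regularity (existence of `u_t`, `u_x`, `u_{xx}`) on `(0,τ) × Q`. -/
def Reg12 (τ : ℝ) (Q : Set ℝ) (u : ℝ → ℝ → ℝ) : Prop :=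
  ∀ t ∈ Ioo (0 : ℝ) τ, ∀ x ∈ Q,
    DifferentiableAt ℝ (fun s => u s x) t ∧
      DifferentiableAt ℝ (fun y => u t y) x ∧
        DifferentiableAt ℝ (fun y => spaceDeriv u t y) x

/-- Membership in the parabolic Hölder space `C^{1+α/2,2+α}((0,τ)×Q)`. -/
def MemP (α τ : ℝ) (Q : Set ℝ) (u : ℝ → ℝ → ℝ) : Prop :=
  ContinuousOn (fun p : ℝ × ℝ => u p.1 p.2) (Icc 0 τ ×ˢ closure Q) ∧
    Reg12 τ (closure Q) u ∧
      ∃ C : ℝ,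
        (∀ t ∈ Ioo (0 : ℝ) τ, ∀ x ∈ Q,
          |u t x| ≤ C ∧ |timeDeriv u t x| ≤ C ∧ |spaceDeriv u t x| ≤ C ∧
            |spaceDeriv2 u t x| ≤ C) ∧
          PHolderBnd α τ Q (timeDeriv u) C ∧ PHolderBnd α τ Q (spaceDeriv2 u) C ∧
            ∀ x ∈ Q, HolderBnd ((1 + α) / 2) (Ioo 0 τ) (fun t => spaceDeriv u t x) C

/-- Membership in `C^{2+α}([-ℓ,ℓ])`. -/
def MemC2 (α ℓ : ℝ) (v : ℝ → ℝ) : Prop :=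
  ContinuousOn v (Icc (-ℓ) ℓ) ∧
    (∀ x ∈ Icc (-ℓ) ℓ, DifferentiableAt ℝ v x ∧ DifferentiableAt ℝ (deriv v) x) ∧
      ContinuousOn (deriv (deriv v)) (Icc (-ℓ) ℓ) ∧
        ∃ C : ℝ, HolderBnd α (Icc (-ℓ) ℓ) (deriv (deriv v)) C

/-- The `C^{2+α}([-ℓ,ℓ])` norm. -/
def c2Norm (α ℓ : ℝ) (v : ℝ → ℝ) : ℝ :=
  supI (Icc (-ℓ) ℓ) v + supI (Icc (-ℓ) ℓ) (deriv v) + supI (Icc (-ℓ) ℓ) (deriv (deriv v)) +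
    hSemi α (Icc (-ℓ) ℓ) (deriv (deriv v))

/-- Regularity of a classical solution on `(0,τ) × (-ℓ,ℓ)` for a problem with dynamical
boundary conditions at `x = ±ℓ`: continuity on the closed cylinder, interior `C^{1,2}`
regularity and existence of `u_t` and `u_x` at the lateral boundary. -/
def ClassicalReg (τ ℓ : ℝ) (u : ℝ → ℝ → ℝ) : Prop :=
  ContinuousOn (fun p : ℝ × ℝ => u p.1 p.2) (Icc 0 τ ×ˢ Icc (-ℓ) ℓ) ∧
    Reg12 τ (Ioo (-ℓ) ℓ) u ∧
      ∀ t ∈ Ioo (0 : ℝ) τ,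
        DifferentiableAt ℝ (fun s => u s ℓ) t ∧ DifferentiableAt ℝ (fun y => u t y) ℓ ∧
          DifferentiableAt ℝ (fun s => u s (-ℓ)) t ∧ DifferentiableAt ℝ (fun y => u t y) (-ℓ)

/-- `u` is a classical solution on `(0,τ) × (-ℓ,ℓ)` of the quasilinear equation (1) with the
gradient-dependent dynamical boundary conditions (2) and initial value `u0`. -/
def SolQ (τ ℓ : ℝ) (a f b g : ℝ → ℝ → ℝ → ℝ → ℝ) (u0 : ℝ → ℝ) (u : ℝ → ℝ → ℝ) : Prop :=
  ClassicalReg τ ℓ u ∧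
    (∀ t ∈ Ioo (0 : ℝ) τ, ∀ x ∈ Ioo (-ℓ) ℓ,
      timeDeriv u t x - a t x (u t x) (spaceDeriv u t x) * spaceDeriv2 u t x
        = f t x (u t x) (spaceDeriv u t x)) ∧
      (∀ t ∈ Ioo (0 : ℝ) τ,
        timeDeriv u t ℓ + b t ℓ (u t ℓ) (spaceDeriv u t ℓ) * spaceDeriv u t ℓ
            = g t ℓ (u t ℓ) (spaceDeriv u t ℓ) ∧
          timeDeriv u t (-ℓ) - b t (-ℓ) (u t (-ℓ)) (spaceDeriv u t (-ℓ)) * spaceDeriv u t (-ℓ)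
            = g t (-ℓ) (u t (-ℓ)) (spaceDeriv u t (-ℓ))) ∧
        ∀ x ∈ Icc (-ℓ) ℓ, u 0 x = u0 x

/-- `u` is a classical solution on `(0,τ) × (-ℓ,ℓ)` of the quasilinear equation (1) with the
gradient-independent dynamical boundary conditions (2a) and initial value `u0`. -/
def SolQ2a (τ ℓ : ℝ) (a f : ℝ → ℝ → ℝ → ℝ → ℝ) (b g : ℝ → ℝ → ℝ → ℝ) (u0 : ℝ → ℝ)
    (u : ℝ → ℝ → ℝ) : Prop :=
  ClassicalReg τ ℓ u ∧
    (∀ t ∈ Ioo (0 : ℝ) τ, ∀ x ∈ Ioo (-ℓ) ℓ,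
      timeDeriv u t x - a t x (u t x) (spaceDeriv u t x) * spaceDeriv2 u t x
        = f t x (u t x) (spaceDeriv u t x)) ∧
      (∀ t ∈ Ioo (0 : ℝ) τ,
        timeDeriv u t ℓ + b t ℓ (u t ℓ) * spaceDeriv u t ℓ = g t ℓ (u t ℓ) ∧
          timeDeriv u t (-ℓ) - b t (-ℓ) (u t (-ℓ)) * spaceDeriv u t (-ℓ) = g t (-ℓ) (u t (-ℓ))) ∧
        ∀ x ∈ Icc (-ℓ) ℓ, u 0 x = u0 x

/-! ### One-variable calculus -/

lemma hasDerivAt_nonneg_of_left_max {φ : ℝ → ℝ} {d c : ℝ} (hd : HasDerivAt φ d c)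
    (hm : ∀ᶠ z in 𝓝[<] c, φ z ≤ φ c) : 0 ≤ d := by
  have h1 : Tendsto (slope φ c) (𝓝[<] c) (𝓝 d) :=
    (hasDerivAt_iff_tendsto_slope.1 hd).mono_left
      (nhdsWithin_mono _ (fun z hz => ne_of_lt hz))
  refine ge_of_tendsto h1 ?_
  filter_upwards [hm, self_mem_nhdsWithin] with z hz hzc
  rw [slope_def_field]
  exact div_nonneg_of_nonpos (by linarith) (by have : z < c := hzc; linarith)

lemma hasDerivAt_nonpos_of_right_max {φ : ℝ → ℝ} {d c : ℝ} (hd : HasDerivAt φ d c)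
    (hm : ∀ᶠ z in 𝓝[>] c, φ z ≤ φ c) : d ≤ 0 := by
  have h1 : Tendsto (slope φ c) (𝓝[>] c) (𝓝 d) :=
    (hasDerivAt_iff_tendsto_slope.1 hd).mono_left
      (nhdsWithin_mono _ (fun z hz => ne_of_gt hz))
  refine le_of_tendsto h1 ?_
  filter_upwards [hm, self_mem_nhdsWithin] with z hz hzc
  rw [slope_def_field]
  exact div_nonpos_of_nonpos_of_nonneg (by linarith) (by have : c < z := hzc; linarith)

/-- Second-order necessary condition at a local maximum; `φ''` need only exist at the point. -/
lemma second_deriv_nonpos_of_isLocalMax {φ φ' : ℝ → ℝ} {d c : ℝ} (hm : IsLocalMax φ c)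
    (h1 : ∀ᶠ z in 𝓝 c, HasDerivAt φ (φ' z) z) (h2 : HasDerivAt φ' d c) : d ≤ 0 := by
  by_contra hd
  push Not at hd
  have hE : deriv φ =ᶠ[𝓝 c] φ' := h1.mono fun z hz => hz.deriv
  have h2' : deriv (deriv φ) c = d := by rw [hE.deriv_eq, h2.deriv]
  have hc : HasDerivAt φ (φ' c) c := h1.self_of_nhds
  have hmin : IsLocalMin φ c :=
    isLocalMin_of_deriv_deriv_pos (by rw [h2']; exact hd) hm.deriv_eq_zero hc.continuousAt
  -- a simultaneous local maximum and minimum makes `φ` locally constant, forcing `φ'' = 0`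
  have hconst : φ =ᶠ[𝓝 c] fun _ => φ c := by
    filter_upwards [hm, hmin] with z ha hb
    exact le_antisymm ha hb
  have h3 : deriv φ =ᶠ[𝓝 c] fun _ => 0 := by
    have := hconst.deriv
    simpa using this
  rw [h3.deriv_eq] at h2'
  simp at h2'
  linarith

/-! ### The comparison function -/

/-- What the comparison argument needs to know about the modulus `h`: it solves
`h'' = -ψ(h')` on `(0,κ)` with `h' = q ≥ q₀`, `h(0) = 0` and `h(κ) = 2M`, squeezed between the
lines of slope `q₀` and `q₁`. -/
structure IsBarrier (q₀ q₁ κ M : ℝ) (ψ q h : ℝ → ℝ) : Prop where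
  zero : h 0 = 0
  top : h κ = 2 * M
  cont : ContinuousOn h (Icc 0 κ)
  deriv1 : ∀ s ∈ Ioo 0 κ, HasDerivAt h (q s) s
  deriv2 : ∀ s ∈ Ioo 0 κ, HasDerivAt q (-ψ (q s)) s
  slope_ge : ∀ s ∈ Icc 0 κ, q₀ ≤ q s
  lower : ∀ s ∈ Icc 0 κ, q₀ * s ≤ h s
  upper : ∀ s ∈ Icc 0 κ, h s ≤ q₁ * s

/-- The construction of the barrier for a `ψ` that is continuous on all of `ℝ`. -/
lemma isBarrier_of_continuous {q₀ q₁ κ M : ℝ} {ψ q h : ℝ → ℝ} (hq : q₀ < q₁)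
    (hψc : Continuous ψ) (hψ1 : ∀ ρ, 1 ≤ ψ ρ)
    (hint : (∫ ρ in q₀..q₁, ρ / ψ ρ) = 2 * M) (hκ : κ = ∫ ρ in q₀..q₁, 1 / ψ ρ)
    (hqleft : ∀ ξ ∈ Icc q₀ q₁, q (∫ ρ in ξ..q₁, 1 / ψ ρ) = ξ)
    (hqright : ∀ s ∈ Icc (0:ℝ) κ, q s ∈ Icc q₀ q₁ ∧ (∫ ρ in (q s)..q₁, 1 / ψ ρ) = s)
    (hh : ∀ s ∈ Icc (0:ℝ) κ, h s = ∫ ρ in (q s)..q₁, ρ / ψ ρ) :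
    IsBarrier q₀ q₁ κ M ψ q h ∧ 0 < κ := by
  have hpos : ∀ ρ, 0 < ψ ρ := fun ρ => lt_of_lt_of_le one_pos (hψ1 ρ)
  have hne : ∀ ρ, ψ ρ ≠ 0 := fun ρ => (hpos ρ).ne'
  have hc1 : Continuous fun ρ => 1 / ψ ρ := continuous_const.div hψc hne
  have hc2 : Continuous fun ρ => ρ / ψ ρ := continuous_id.div hψc hne
  have hGd : ∀ ξ, HasDerivAt (fun ξ => ∫ ρ in ξ..q₁, 1 / ψ ρ) (-(1 / ψ ξ)) ξ := fun ξ =>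
    intervalIntegral.integral_hasDerivAt_left (hc1.intervalIntegrable _ _)
      hc1.stronglyMeasurable.stronglyMeasurableAtFilter hc1.continuousAt
  have hHd : ∀ ξ, HasDerivAt (fun ξ => ∫ ρ in ξ..q₁, ρ / ψ ρ) (-(ξ / ψ ξ)) ξ := fun ξ =>
    intervalIntegral.integral_hasDerivAt_left (hc2.intervalIntegrable _ _)
      hc2.stronglyMeasurable.stronglyMeasurableAtFilter hc2.continuousAt
  have hκpos : 0 < κ := by
    rw [hκ]
    exact intervalIntegral.intervalIntegral_pos_of_pos (hc1.intervalIntegrable _ _)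
      (fun x => one_div_pos.2 (hpos x)) hq
  have h0mem : (0:ℝ) ∈ Icc 0 κ := ⟨le_rfl, hκpos.le⟩
  have hκmem : κ ∈ Icc 0 κ := ⟨hκpos.le, le_rfl⟩
  have hq0 : q 0 = q₁ := by simpa using hqleft q₁ ⟨hq.le, le_rfl⟩
  have hqκ : q κ = q₀ := by
    have := hqleft q₀ ⟨le_rfl, hq.le⟩
    rwa [← hκ] at this
  obtain ⟨C, hC⟩ : ∃ C, ∀ ρ ∈ Icc q₀ q₁, ψ ρ ≤ C := by
    obtain ⟨C, hC⟩ := (isCompact_Icc (a := q₀) (b := q₁)).bddAbove_image hψc.continuousOn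
    exact ⟨C, fun ρ hρ => hC ⟨ρ, hρ, rfl⟩⟩
  have hC0 : 0 < C := lt_of_lt_of_le (hpos q₀) (hC q₀ ⟨le_rfl, hq.le⟩)
  -- `q` is Lipschitz because its inverse has slope at least `1 / C` in absolute value
  have hlip0 : ∀ s ∈ Icc (0:ℝ) κ, ∀ s' ∈ Icc (0:ℝ) κ, q s ≤ q s' →
      q s' - q s ≤ C * (s - s') := by
    intro s hs s' hs' hle
    have e : (∫ ρ in (q s)..(q s'), 1 / ψ ρ) = s - s' := by
      have := intervalIntegral.integral_add_adjacent_intervals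
        (hc1.intervalIntegrable (μ := volume) (q s) (q s')) (hc1.intervalIntegrable (q s') q₁)
      rw [(hqright s hs).2, (hqright s' hs').2] at this
      linarith
    have m : (∫ ρ in (q s)..(q s'), 1 / C) ≤ ∫ ρ in (q s)..(q s'), 1 / ψ ρ := by
      refine intervalIntegral.integral_mono_on hle (by simp) (hc1.intervalIntegrable _ _) ?_
      intro ρ hρ
      exact one_div_le_one_div_of_le (hpos ρ)
        (hC ρ ⟨(hqright s hs).1.1.trans hρ.1, hρ.2.trans (hqright s' hs').1.2⟩)
    rw [e, intervalIntegral.integral_const, smul_eq_mul, mul_one_div, div_le_iff₀ hC0] at m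
    linarith
  have hlip : ∀ s ∈ Icc (0:ℝ) κ, ∀ s' ∈ Icc (0:ℝ) κ, |q s - q s'| ≤ C * |s - s'| := by
    intro s hs s' hs'
    rcases le_total (q s) (q s') with hle | hle
    · have := hlip0 s hs s' hs' hle
      rw [abs_of_nonpos (by linarith)]
      have := mul_le_mul_of_nonneg_left (le_abs_self (s - s')) hC0.le
      linarith
    · have := hlip0 s' hs' s hs hle
      rw [abs_of_nonneg (by linarith)]
      have := mul_le_mul_of_nonneg_left (neg_abs_le (s - s')) hC0.le
      linarith
  have hqc : ContinuousOn q (Icc 0 κ) := by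
    have : LipschitzOnWith C.toNNReal q (Icc 0 κ) := by
      refine LipschitzOnWith.of_dist_le_mul fun x hx y hy => ?_
      rw [Real.dist_eq, Real.dist_eq, Real.coe_toNNReal _ hC0.le]
      exact hlip x hx y hy
    exact this.continuousOn
  have hH : Continuous fun ξ => ∫ ρ in ξ..q₁, ρ / ψ ρ :=
    continuous_iff_continuousAt.2 fun ξ => (hHd ξ).continuousAt
  have hqd : ∀ s ∈ Ioo 0 κ, HasDerivAt q (-ψ (q s)) s := by
    intro s hs
    have hn : Icc 0 κ ∈ 𝓝 s := Icc_mem_nhds hs.1 hs.2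
    have := HasDerivAt.of_local_left_inverse (hqc.continuousAt hn) (hGd (q s))
      (neg_ne_zero.2 (one_div_ne_zero (hne _)))
      (by filter_upwards [hn] with z hz using (hqright z hz).2)
    rwa [inv_neg, one_div, inv_inv] at this
  refine ⟨⟨?_, ?_, ?_, ?_, hqd, fun s hs => (hqright s hs).1.1, ?_, ?_⟩, hκpos⟩
  · rw [hh 0 h0mem, hq0]; simp
  · rw [hh κ hκmem, hqκ, hint]
  · exact (hH.comp_continuousOn hqc).congr hh
  · intro s hs
    have h1 := (hHd (q s)).comp s (hqd s hs)
    have h2 : HasDerivAt ((fun ξ => ∫ ρ in ξ..q₁, ρ / ψ ρ) ∘ q) (q s) s := by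
      rwa [neg_mul_neg, div_mul_cancel₀ _ (hne _)] at h1
    refine h2.congr_of_eventuallyEq ?_
    filter_upwards [Icc_mem_nhds hs.1 hs.2] with z hz using hh z hz
  · intro s hs
    obtain ⟨hm, e⟩ := hqright s hs
    rw [hh s hs]
    conv_lhs => rw [← e]
    rw [← intervalIntegral.integral_const_mul]
    refine intervalIntegral.integral_mono_on hm.2
      ((hc1.const_mul q₀ : Continuous _).intervalIntegrable _ _) (hc2.intervalIntegrable _ _) ?_
    intro ρ hρ
    rw [mul_one_div]
    exact div_le_div_of_nonneg_right (hm.1.trans hρ.1) (hpos ρ).le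
  · intro s hs
    obtain ⟨hm, e⟩ := hqright s hs
    rw [hh s hs]
    conv_rhs => rw [← e]
    rw [← intervalIntegral.integral_const_mul]
    refine intervalIntegral.integral_mono_on hm.2
      (hc2.intervalIntegrable _ _) ((hc1.const_mul q₁ : Continuous _).intervalIntegrable _ _) ?_
    intro ρ hρ
    rw [mul_one_div]
    exact div_le_div_of_nonneg_right hρ.2 (hpos ρ).le

/-- Only the values of `ψ` on `[0,∞)` matter, so `ψ` may be replaced by the globally continuous
function `ρ ↦ ψ (max ρ 0)`. -/
lemma isBarrier_of_continuousOn {q₀ q₁ κ M : ℝ} {ψ q h : ℝ → ℝ} (hq : q₀ < q₁) (hq0 : 0 ≤ q₀)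
    (hψc : ContinuousOn ψ (Ici 0)) (hψ1 : ∀ ρ ∈ Ici (0:ℝ), 1 ≤ ψ ρ)
    (hint : (∫ ρ in q₀..q₁, ρ / ψ ρ) = 2 * M) (hκ : κ = ∫ ρ in q₀..q₁, 1 / ψ ρ)
    (hqleft : ∀ ξ ∈ Icc q₀ q₁, q (∫ ρ in ξ..q₁, 1 / ψ ρ) = ξ)
    (hqright : ∀ s ∈ Icc (0:ℝ) κ, q s ∈ Icc q₀ q₁ ∧ (∫ ρ in (q s)..q₁, 1 / ψ ρ) = s)
    (hh : ∀ s, h s = ∫ ρ in (q s)..q₁, ρ / ψ ρ) :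
    IsBarrier q₀ q₁ κ M ψ q h ∧ 0 < κ := by
  have hE : ∀ ρ, 0 ≤ ρ → ψ (max ρ 0) = ψ ρ := fun ρ hρ => by rw [max_eq_left hρ]
  have e1 : ∀ ξ ∈ Icc q₀ q₁, (∫ ρ in ξ..q₁, 1 / ψ (max ρ 0)) = ∫ ρ in ξ..q₁, 1 / ψ ρ := by
    intro ξ hξ
    refine intervalIntegral.integral_congr fun ρ hρ => ?_
    rw [uIcc_of_le hξ.2] at hρ
    simp only [hE ρ (hq0.trans (hξ.1.trans hρ.1))]
  have e2 : ∀ ξ ∈ Icc q₀ q₁, (∫ ρ in ξ..q₁, ρ / ψ (max ρ 0)) = ∫ ρ in ξ..q₁, ρ / ψ ρ := by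
    intro ξ hξ
    refine intervalIntegral.integral_congr fun ρ hρ => ?_
    rw [uIcc_of_le hξ.2] at hρ
    simp only [hE ρ (hq0.trans (hξ.1.trans hρ.1))]
  have hm : q₀ ∈ Icc q₀ q₁ := ⟨le_rfl, hq.le⟩
  obtain ⟨hB, hκ0⟩ := isBarrier_of_continuous (ψ := fun ρ => ψ (max ρ 0)) (M := M) (κ := κ)
    (q := q) (h := h) hq
    (hψc.comp_continuous (by fun_prop) (fun ρ => le_max_right ρ 0))
    (fun ρ => hψ1 _ (le_max_right ρ 0))
    (by rw [e2 q₀ hm, hint]) (by rw [e1 q₀ hm, hκ])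
    (fun ξ hξ => by rw [e1 ξ hξ]; exact hqleft ξ hξ)
    (fun s hs => ⟨(hqright s hs).1, by rw [e1 _ (hqright s hs).1]; exact (hqright s hs).2⟩)
    (fun s hs => by rw [hh, e2 _ (hqright s hs).1])
  refine ⟨⟨hB.zero, hB.top, hB.cont, hB.deriv1, fun s hs => ?_, hB.slope_ge, hB.lower,
    hB.upper⟩, hκ0⟩
  have := hB.deriv2 s hs
  rwa [hE _ (hq0.trans (hB.slope_ge s ⟨hs.1.le, hs.2.le⟩))] at this

/-! ### The doubling argument -/

/-- The consequences of the equation and of the dynamical boundary conditions that drive the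
comparison: `|u_t - A u_xx| ≤ A ψ(|u_x|)` inside with some `A > 0` depending on the point, and sign
conditions on `u_t` at `x = ±ℓ` where `|u_x| ≥ q₀`. The conditions are invariant under
`u ↦ -u`. -/
structure DiffIneq (τ ℓ q₀ : ℝ) (ψ : ℝ → ℝ) (u : ℝ → ℝ → ℝ) : Prop where
  reg : ClassicalReg τ ℓ u
  inner : ∀ t ∈ Ioo (0:ℝ) τ, ∀ x ∈ Ioo (-ℓ) ℓ, ∃ A : ℝ, 0 < A ∧
    |timeDeriv u t x - A * spaceDeriv2 u t x| ≤ A * ψ |spaceDeriv u t x|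
  right_pos : ∀ t ∈ Ioo (0:ℝ) τ, q₀ ≤ spaceDeriv u t ℓ → timeDeriv u t ℓ ≤ 0
  right_neg : ∀ t ∈ Ioo (0:ℝ) τ, spaceDeriv u t ℓ ≤ -q₀ → 0 ≤ timeDeriv u t ℓ
  left_pos : ∀ t ∈ Ioo (0:ℝ) τ, q₀ ≤ spaceDeriv u t (-ℓ) → 0 ≤ timeDeriv u t (-ℓ)
  left_neg : ∀ t ∈ Ioo (0:ℝ) τ, spaceDeriv u t (-ℓ) ≤ -q₀ → timeDeriv u t (-ℓ) ≤ 0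

lemma DiffIneq.neg {τ ℓ q₀ : ℝ} {ψ : ℝ → ℝ} {u : ℝ → ℝ → ℝ} (H : DiffIneq τ ℓ q₀ ψ u) :
    DiffIneq τ ℓ q₀ ψ (fun t x => -u t x) := by
  have e1 : ∀ t x, timeDeriv (fun t x => -u t x) t x = -timeDeriv u t x := fun t x => by
    simp only [timeDeriv]; exact deriv.fun_neg
  have e2 : ∀ t x, spaceDeriv (fun t x => -u t x) t x = -spaceDeriv u t x := fun t x => by
    simp only [spaceDeriv]; exact deriv.fun_neg
  have e3 : ∀ t x, spaceDeriv2 (fun t x => -u t x) t x = -spaceDeriv2 u t x := fun t x => by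
    simp only [spaceDeriv2, e2]; exact deriv.fun_neg
  obtain ⟨hc, hr, hb⟩ := H.reg
  refine ⟨⟨hc.neg, fun t ht x hx => ?_, fun t ht => ?_⟩, fun t ht x hx => ?_, fun t ht hp => ?_,
    fun t ht hp => ?_, fun t ht hp => ?_, fun t ht hp => ?_⟩
  · obtain ⟨h1, h2, h3⟩ := hr t ht x hx
    refine ⟨h1.neg, h2.neg, ?_⟩
    simp only [e2]
    exact h3.neg
  · obtain ⟨h1, h2, h3, h4⟩ := hb t ht
    exact ⟨h1.neg, h2.neg, h3.neg, h4.neg⟩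
  · obtain ⟨A, hA, hle⟩ := H.inner t ht x hx
    refine ⟨A, hA, ?_⟩
    rw [e1, e2, e3, abs_neg, ← abs_neg]
    convert hle using 2
    ring
  · rw [e2] at hp; rw [e1]
    linarith [H.right_neg t ht (by linarith)]
  · rw [e2] at hp; rw [e1]
    linarith [H.right_pos t ht (by linarith)]
  · rw [e2] at hp; rw [e1]
    linarith [H.left_neg t ht (by linarith)]
  · rw [e2] at hp; rw [e1]
    linarith [H.left_pos t ht (by linarith)]

/-- At a point where `x ↦ u(t,x) - h(x-y)` is maximal, `u_t(t,x) ≤ 0`. -/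
lemma DiffIneq.timeDeriv_nonpos {τ ℓ q₀ q₁ κ M : ℝ} {ψ q h : ℝ → ℝ} {u : ℝ → ℝ → ℝ}
    (H : DiffIneq τ ℓ q₀ ψ u) (B : IsBarrier q₀ q₁ κ M ψ q h) (hq0 : 0 ≤ q₀)
    {t x y : ℝ} (ht : t ∈ Ioo 0 τ) (hx : x ∈ Ioc (-ℓ) ℓ) (hs : x - y ∈ Ioo 0 κ)
    (hmax : ∀ z ∈ Icc (-ℓ) ℓ, z - y ∈ Icc 0 κ → u t z - h (z - y) ≤ u t x - h (x - y)) :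
    timeDeriv u t x ≤ 0 := by
  obtain ⟨-, hr, hb⟩ := H.reg
  have hcont : Tendsto (fun z => z - y) (𝓝 x) (𝓝 (x - y)) :=
    (continuous_id.sub continuous_const).continuousAt
  have hnear : ∀ᶠ z in 𝓝 x, z - y ∈ Ioo 0 κ := hcont (Ioo_mem_nhds hs.1 hs.2)
  have hhd : ∀ z, z - y ∈ Ioo 0 κ → HasDerivAt (fun z => h (z - y)) (q (z - y)) z := by
    intro z hz
    exact (B.deriv1 _ hz).comp_sub_const z y
  rcases eq_or_lt_of_le hx.2 with rfl | hlt
  · refine H.right_pos t ht ?_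
    have hd : HasDerivAt (fun z => u t z - h (z - y)) (spaceDeriv u t x - q (x - y)) x :=
      (hb t ht).2.1.hasDerivAt.sub (hhd x hs)
    have := hasDerivAt_nonneg_of_left_max hd (by
      have : ∀ᶠ z in 𝓝[<] x, -x < z :=
        (Ioi_mem_nhds hx.1 : Ioi (-x) ∈ 𝓝 x) |> mem_nhdsWithin_of_mem_nhds
      filter_upwards [this, nhdsWithin_le_nhds hnear, self_mem_nhdsWithin] with z h1 h2 h3
      exact hmax z ⟨h1.le, le_of_lt h3⟩ ⟨h2.1.le, h2.2.le⟩)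
    have := B.slope_ge _ ⟨hs.1.le, hs.2.le⟩
    linarith
  · have hxI : x ∈ Ioo (-ℓ) ℓ := ⟨hx.1, hlt⟩
    have hnx : ∀ᶠ z in 𝓝 x, z ∈ Ioo (-ℓ) ℓ := Ioo_mem_nhds hx.1 hlt
    have hd : ∀ z ∈ Ioo (-ℓ) ℓ, z - y ∈ Ioo 0 κ →
        HasDerivAt (fun z => u t z - h (z - y)) (spaceDeriv u t z - q (z - y)) z :=
      fun z hz hz' => (hr t ht z hz).2.1.hasDerivAt.sub (hhd z hz')
    have hloc : IsLocalMax (fun z => u t z - h (z - y)) x := by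
      filter_upwards [hnear, hnx] with z h1 h2
      exact hmax z ⟨h2.1.le, h2.2.le⟩ ⟨h1.1.le, h1.2.le⟩
    have h1 : spaceDeriv u t x = q (x - y) := by
      linarith [hloc.hasDerivAt_eq_zero (hd x hxI hs)]
    have h2 : spaceDeriv2 u t x - -ψ (q (x - y)) ≤ 0 := by
      refine second_deriv_nonpos_of_isLocalMax (φ' := fun z => spaceDeriv u t z - q (z - y))
        hloc ?_ ?_
      · filter_upwards [hnear, hnx] with z h1 h2 using hd z h2 h1
      · exact (hr t ht x hxI).2.2.hasDerivAt.sub ((B.deriv2 _ hs).comp_sub_const x y)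
    obtain ⟨A, hA, hle⟩ := H.inner t ht x hxI
    have hq : 0 ≤ q (x - y) := hq0.trans (B.slope_ge _ ⟨hs.1.le, hs.2.le⟩)
    rw [h1, abs_of_nonneg hq] at hle
    have := (abs_le.1 hle).2
    nlinarith

/-- At a point where `y ↦ -u(t,y) - h(x-y)` is maximal, `u_t(t,y) ≥ 0`. -/
lemma DiffIneq.timeDeriv_nonneg {τ ℓ q₀ q₁ κ M : ℝ} {ψ q h : ℝ → ℝ} {u : ℝ → ℝ → ℝ}
    (H : DiffIneq τ ℓ q₀ ψ u) (B : IsBarrier q₀ q₁ κ M ψ q h) (hq0 : 0 ≤ q₀)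
    {t x y : ℝ} (ht : t ∈ Ioo 0 τ) (hy : y ∈ Ico (-ℓ) ℓ) (hs : x - y ∈ Ioo 0 κ)
    (hmax : ∀ z ∈ Icc (-ℓ) ℓ, x - z ∈ Icc 0 κ → -u t z - h (x - z) ≤ -u t y - h (x - y)) :
    0 ≤ timeDeriv u t y := by
  obtain ⟨-, hr, hb⟩ := H.reg
  have hcont : Tendsto (fun z => x - z) (𝓝 y) (𝓝 (x - y)) :=
    (continuous_const.sub continuous_id).continuousAt
  have hnear : ∀ᶠ z in 𝓝 y, x - z ∈ Ioo 0 κ := hcont (Ioo_mem_nhds hs.1 hs.2)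
  have hhd : ∀ z, x - z ∈ Ioo 0 κ → HasDerivAt (fun z => h (x - z)) (-q (x - z)) z := by
    intro z hz
    exact (B.deriv1 _ hz).comp_const_sub x z
  rcases eq_or_lt_of_le hy.1 with rfl | hlt
  · refine H.left_pos t ht ?_
    have hd : HasDerivAt (fun z => -u t z - h (x - z))
        (-spaceDeriv u t (-ℓ) - -q (x - -ℓ)) (-ℓ) :=
      (hb t ht).2.2.2.hasDerivAt.neg.sub (hhd _ hs)
    have := hasDerivAt_nonpos_of_right_max hd (by
      have : ∀ᶠ z in 𝓝[>] (-ℓ), z < ℓ :=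
        (Iio_mem_nhds hy.2 : Iio ℓ ∈ 𝓝 (-ℓ)) |> mem_nhdsWithin_of_mem_nhds
      filter_upwards [this, nhdsWithin_le_nhds hnear, self_mem_nhdsWithin] with z h1 h2 h3
      exact hmax z ⟨le_of_lt h3, h1.le⟩ ⟨h2.1.le, h2.2.le⟩)
    have := B.slope_ge _ ⟨hs.1.le, hs.2.le⟩
    linarith
  · have hyI : y ∈ Ioo (-ℓ) ℓ := ⟨hlt, hy.2⟩
    have hny : ∀ᶠ z in 𝓝 y, z ∈ Ioo (-ℓ) ℓ := Ioo_mem_nhds hlt hy.2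
    have hd : ∀ z ∈ Ioo (-ℓ) ℓ, x - z ∈ Ioo 0 κ →
        HasDerivAt (fun z => -u t z - h (x - z)) (-spaceDeriv u t z - -q (x - z)) z :=
      fun z hz hz' => (hr t ht z hz).2.1.hasDerivAt.neg.sub (hhd z hz')
    have hloc : IsLocalMax (fun z => -u t z - h (x - z)) y := by
      filter_upwards [hnear, hny] with z h1 h2
      exact hmax z ⟨h2.1.le, h2.2.le⟩ ⟨h1.1.le, h1.2.le⟩
    have h1 : spaceDeriv u t y = q (x - y) := by
      linarith [hloc.hasDerivAt_eq_zero (hd y hyI hs)]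
    have h2 : -spaceDeriv2 u t y - -(- -ψ (q (x - y))) ≤ 0 := by
      refine second_deriv_nonpos_of_isLocalMax (φ' := fun z => -spaceDeriv u t z - -q (x - z))
        hloc ?_ ?_
      · filter_upwards [hnear, hny] with z h1 h2 using hd z h2 h1
      · exact (hr t ht y hyI).2.2.hasDerivAt.neg.sub ((B.deriv2 _ hs).comp_const_sub x y).neg
    obtain ⟨A, hA, hle⟩ := H.inner t ht y hyI
    have hq : 0 ≤ q (x - y) := hq0.trans (B.slope_ge _ ⟨hs.1.le, hs.2.le⟩)
    rw [h1, abs_of_nonneg hq] at hle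
    have := (abs_le.1 hle).1
    nlinarith

/-- The one-sided modulus estimate up to a time `t₁ < τ`, with the strictness parameter `ε`. -/
lemma DiffIneq.sub_le_add {τ ℓ q₀ q₁ κ M : ℝ} {ψ q h : ℝ → ℝ} {u : ℝ → ℝ → ℝ}
    (H : DiffIneq τ ℓ q₀ ψ u) (B : IsBarrier q₀ q₁ κ M ψ q h) (hq0 : 0 ≤ q₀)
    (hM : ∀ t ∈ Icc 0 τ, ∀ x ∈ Icc (-ℓ) ℓ, |u t x| ≤ M)
    (hinit : ∀ x ∈ Icc (-ℓ) ℓ, ∀ y ∈ Icc (-ℓ) ℓ, x - y ∈ Icc 0 κ → u 0 x - u 0 y ≤ q₀ * (x - y))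
    {ε : ℝ} (hε : 0 < ε) {t₁ x₁ y₁ : ℝ} (ht₁ : t₁ ∈ Ico 0 τ) (hx₁ : x₁ ∈ Icc (-ℓ) ℓ)
    (hy₁ : y₁ ∈ Icc (-ℓ) ℓ) (hs₁ : x₁ - y₁ ∈ Icc 0 κ) :
    u t₁ x₁ - u t₁ y₁ ≤ h (x₁ - y₁) + ε * t₁ := by
  by_contra hcon
  push Not at hcon
  obtain ⟨hc, hr, hb⟩ := H.reg
  set S : Set (ℝ × ℝ × ℝ) :=
    (Icc 0 t₁ ×ˢ Icc (-ℓ) ℓ ×ˢ Icc (-ℓ) ℓ) ∩ (fun w => w.2.1 - w.2.2) ⁻¹' Icc 0 κ with hS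
  have hScomp : IsCompact S :=
    (isCompact_Icc.prod (isCompact_Icc.prod isCompact_Icc)).inter_right
      (isClosed_Icc.preimage (by fun_prop))
  set v : ℝ × ℝ × ℝ → ℝ := fun w =>
    u w.1 w.2.1 - u w.1 w.2.2 - h (w.2.1 - w.2.2) - ε * w.1 with hv
  have hvc : ContinuousOn v S := by
    have c1 : ContinuousOn (fun w : ℝ × ℝ × ℝ => u w.1 w.2.1) S :=
      hc.comp (f := fun w : ℝ × ℝ × ℝ => (w.1, w.2.1)) (by fun_prop)
        (fun w hw => ⟨⟨hw.1.1.1, hw.1.1.2.trans ht₁.2.le⟩, hw.1.2.1⟩)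
    have c2 : ContinuousOn (fun w : ℝ × ℝ × ℝ => u w.1 w.2.2) S :=
      hc.comp (f := fun w : ℝ × ℝ × ℝ => (w.1, w.2.2)) (by fun_prop)
        (fun w hw => ⟨⟨hw.1.1.1, hw.1.1.2.trans ht₁.2.le⟩, hw.1.2.2⟩)
    have c3 : ContinuousOn (fun w : ℝ × ℝ × ℝ => h (w.2.1 - w.2.2)) S :=
      B.cont.comp (f := fun w : ℝ × ℝ × ℝ => w.2.1 - w.2.2) (by fun_prop) (fun w hw => hw.2)
    exact ((c1.sub c2).sub c3).sub (by fun_prop)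
  have hmem₁ : ((t₁, x₁, y₁) : ℝ × ℝ × ℝ) ∈ S := ⟨⟨⟨ht₁.1, le_rfl⟩, hx₁, hy₁⟩, hs₁⟩
  obtain ⟨⟨t, x, y⟩, ⟨⟨ht, hx, hy⟩, hs⟩, hmax⟩ := hScomp.exists_isMaxOn ⟨_, hmem₁⟩ hvc
  simp only [mem_preimage] at ht hx hy hs
  have hmax' : ∀ t' x' y', t' ∈ Icc 0 t₁ → x' ∈ Icc (-ℓ) ℓ → y' ∈ Icc (-ℓ) ℓ →
      x' - y' ∈ Icc 0 κ → u t' x' - u t' y' - h (x' - y') - ε * t' ≤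
        u t x - u t y - h (x - y) - ε * t :=
    fun t' x' y' h1 h2 h3 h4 => hmax (show (t', x', y') ∈ S from ⟨⟨h1, h2, h3⟩, h4⟩)
  have hpos : 0 < u t x - u t y - h (x - y) - ε * t := by
    have := hmax' t₁ x₁ y₁ ⟨ht₁.1, le_rfl⟩ hx₁ hy₁ hs₁
    linarith
  have htτ : t ∈ Icc 0 τ := ⟨ht.1, ht.2.trans ht₁.2.le⟩
  have hεt : 0 ≤ ε * t := mul_nonneg hε.le ht.1
  -- the maximum lies off the initial time, the diagonal and the line `x - y = κ`
  have ht0 : 0 < t := by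
    rcases eq_or_lt_of_le ht.1 with h0 | h0
    · rw [← h0] at hpos
      linarith [hinit x hx y hy hs, B.lower _ hs]
    · exact h0
  have hs0 : 0 < x - y := by
    rcases eq_or_lt_of_le hs.1 with h0 | h0
    · have hxy : x = y := by linarith
      rw [← h0, B.zero, hxy] at hpos
      linarith
    · exact h0
  have hsκ : x - y < κ := by
    rcases eq_or_lt_of_le hs.2 with h0 | h0
    · rw [h0, B.top] at hpos
      linarith [(abs_le.1 (hM t htτ x hx)).2, (abs_le.1 (hM t htτ y hy)).1]
    · exact h0
  have htI : t ∈ Ioo 0 τ := ⟨ht0, ht.2.trans_lt ht₁.2⟩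
  have hxt : timeDeriv u t x ≤ 0 :=
    H.timeDeriv_nonpos B hq0 htI ⟨by linarith [hy.1], hx.2⟩ ⟨hs0, hsκ⟩
      (fun z hz hzs => by linarith [hmax' t z y ht hz hy hzs])
  have hyt : 0 ≤ timeDeriv u t y :=
    H.timeDeriv_nonneg B hq0 htI ⟨hy.1, by linarith [hx.2]⟩ ⟨hs0, hsκ⟩
      (fun z hz hzs => by linarith [hmax' t x z ht hx hz hzs])
  have hdt : ∀ z ∈ Icc (-ℓ) ℓ, HasDerivAt (fun s => u s z) (timeDeriv u t z) t := by
    intro z hz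
    rcases eq_or_lt_of_le hz.1 with rfl | h1
    · exact (hb t htI).2.2.1.hasDerivAt
    rcases eq_or_lt_of_le hz.2 with rfl | h2
    · exact (hb t htI).1.hasDerivAt
    exact (hr t htI z ⟨h1, h2⟩).1.hasDerivAt
  have hd : HasDerivAt (fun s => u s x - u s y - h (x - y) - ε * s)
      (timeDeriv u t x - timeDeriv u t y - ε * 1) t :=
    (((hdt x hx).sub (hdt y hy)).sub_const _).sub ((hasDerivAt_id t).const_mul ε)
  have := hasDerivAt_nonneg_of_left_max hd (by
    have : ∀ᶠ z in 𝓝[<] t, 0 < z :=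
      (Ioi_mem_nhds ht0 : Ioi 0 ∈ 𝓝 t) |> mem_nhdsWithin_of_mem_nhds
    filter_upwards [this, self_mem_nhdsWithin] with z h1 h2
    exact hmax' z x y ⟨h1.le, (le_of_lt h2).trans ht.2⟩ hx hy hs)
  linarith

lemma DiffIneq.sub_le {τ ℓ q₀ q₁ κ M : ℝ} {ψ q h : ℝ → ℝ} {u : ℝ → ℝ → ℝ}
    (H : DiffIneq τ ℓ q₀ ψ u) (B : IsBarrier q₀ q₁ κ M ψ q h) (hq0 : 0 ≤ q₀) (hτ : 0 < τ)
    (hM : ∀ t ∈ Icc 0 τ, ∀ x ∈ Icc (-ℓ) ℓ, |u t x| ≤ M)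
    (hinit : ∀ x ∈ Icc (-ℓ) ℓ, ∀ y ∈ Icc (-ℓ) ℓ, x - y ∈ Icc 0 κ → u 0 x - u 0 y ≤ q₀ * (x - y))
    {t x y : ℝ} (ht : t ∈ Icc 0 τ) (hx : x ∈ Icc (-ℓ) ℓ)
    (hy : y ∈ Icc (-ℓ) ℓ) (hs : x - y ∈ Icc 0 κ) :
    u t x - u t y ≤ h (x - y) := by
  have key : ∀ s ∈ Ico 0 τ, u s x - u s y ≤ h (x - y) := by
    intro s hs'
    refine le_of_forall_pos_le_add fun δ hδ => ?_
    have := H.sub_le_add B hq0 hM hinit (ε := δ / τ) (by positivity) hs' hx hy hs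
    have h2 : δ / τ * s ≤ δ := by
      rw [div_mul_eq_mul_div, div_le_iff₀ hτ]
      exact mul_le_mul_of_nonneg_left hs'.2.le hδ.le
    linarith
  -- the final time `τ` is reached by continuity
  have hcl : closure (Ico 0 τ) = Icc 0 τ := closure_Ico hτ.ne
  have hc := H.reg.1
  have c1 : ∀ z ∈ Icc (-ℓ) ℓ, ContinuousOn (fun s => u s z) (Icc 0 τ) := fun z hz =>
    hc.comp (f := fun s : ℝ => (s, z)) (by fun_prop) (fun s hs' => ⟨hs', hz⟩)
  have := MapsTo.closure_of_continuousOn (s := Ico 0 τ) (t := Iic (h (x - y)))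
    (f := fun s => u s x - u s y) key (by rw [hcl]; exact (c1 x hx).sub (c1 y hy))
  rw [hcl, closure_Iic] at this
  exact this ht

/-- The key estimate in the proof of Theorem 3.1: the modulus of continuity
`|u(t,x) - u(t,y)| ≤ h(|x-y|)` for bounded classical solutions of (1), (2), and the
resulting gradient bound `|u_x| ≤ h'(0) = q₁`. -/
theorem modulus_of_continuity_estimate
    (T ℓ K M q₀ q₁ κ₀ : ℝ) (ψ q h : ℝ → ℝ)
    (a f b g : ℝ → ℝ → ℝ → ℝ → ℝ) (u0 : ℝ → ℝ)
    (hT : 0 < T) (hl : 0 < ℓ) (hM : 0 < M) (hK : 0 ≤ K) (hKq : K ≤ q₀)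
    (hψreg : ContDiffOn ℝ 1 ψ (Ici 0)) (hψ1 : ∀ ρ ∈ Ici (0:ℝ), 1 ≤ ψ ρ)
    (ha_cont : ContinuousOn (fun w : ℝ × ℝ × ℝ × ℝ => a w.1 w.2.1 w.2.2.1 w.2.2.2)
      (Icc (0:ℝ) T ×ˢ Icc (-ℓ) ℓ ×ˢ (univ : Set (ℝ × ℝ))))
    (hf_cont : ContinuousOn (fun w : ℝ × ℝ × ℝ × ℝ => f w.1 w.2.1 w.2.2.1 w.2.2.2)
      (Icc (0:ℝ) T ×ˢ Icc (-ℓ) ℓ ×ˢ (univ : Set (ℝ × ℝ))))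
    (hb_cont : ContinuousOn (fun w : ℝ × ℝ × ℝ => b w.1 ℓ w.2.1 w.2.2)
        (Icc (0:ℝ) T ×ˢ (univ : Set (ℝ × ℝ))) ∧
      ContinuousOn (fun w : ℝ × ℝ × ℝ => b w.1 (-ℓ) w.2.1 w.2.2)
        (Icc (0:ℝ) T ×ˢ (univ : Set (ℝ × ℝ))))
    (hg_cont : ContinuousOn (fun w : ℝ × ℝ × ℝ => g w.1 ℓ w.2.1 w.2.2)
        (Icc (0:ℝ) T ×ˢ (univ : Set (ℝ × ℝ))) ∧
      ContinuousOn (fun w : ℝ × ℝ × ℝ => g w.1 (-ℓ) w.2.1 w.2.2)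
        (Icc (0:ℝ) T ×ˢ (univ : Set (ℝ × ℝ))))
    (hapos : ∀ t ∈ Icc (0:ℝ) T, ∀ x ∈ Icc (-ℓ) ℓ, ∀ z p : ℝ, 0 < a t x z p)
    (hbpos : ∀ t ∈ Icc (0:ℝ) T, ∀ z p : ℝ, 0 < b t ℓ z p ∧ 0 < b t (-ℓ) z p)
    (hLip : ∀ x ∈ Icc (-ℓ) ℓ, ∀ y ∈ Icc (-ℓ) ℓ, |u0 x - u0 y| ≤ K * |x - y|)
    (hfa : ∀ t ∈ Icc (0:ℝ) T, ∀ x ∈ Icc (-ℓ) ℓ, ∀ z ∈ Icc (-M) M, ∀ p : ℝ,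
      |f t x z p| ≤ a t x z p * ψ (|p|))
    (hbg : ∀ t ∈ Ioc (0:ℝ) T, ∀ z ∈ Icc (-M) M, ∀ p : ℝ, q₀ ≤ p →
      g t ℓ z p ≤ b t ℓ z p * p ∧ -g t ℓ z (-p) ≤ b t ℓ z (-p) * p ∧
      -g t (-ℓ) z p ≤ b t (-ℓ) z p * p ∧ g t (-ℓ) z (-p) ≤ b t (-ℓ) z (-p) * p)
    (hq₁ : q₀ < q₁) (hq₁int : (∫ ρ in q₀..q₁, ρ / ψ ρ) = 2 * M)
    (hκ₀ : κ₀ = ∫ ρ in q₀..q₁, 1 / ψ ρ)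
    (hqleft : ∀ ξ ∈ Icc q₀ q₁, q (∫ ρ in ξ..q₁, 1 / ψ ρ) = ξ)
    (hqright : ∀ s ∈ Icc (0:ℝ) κ₀, q s ∈ Icc q₀ q₁ ∧ (∫ ρ in (q s)..q₁, 1 / ψ ρ) = s)
    (hh : ∀ ξ : ℝ, h ξ = ∫ ρ in (q ξ)..q₁, ρ / ψ ρ) :
    ∀ τ : ℝ, 0 < τ → τ ≤ T → ∀ u : ℝ → ℝ → ℝ, SolQ τ ℓ a f b g u0 u →
      (∀ t ∈ Ioo (0:ℝ) τ, ∀ x ∈ Ioo (-ℓ) ℓ, |u t x| ≤ M) →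
      (∀ t ∈ Icc (0:ℝ) τ, ∀ x ∈ Icc (-ℓ) ℓ, ∀ y ∈ Icc (-ℓ) ℓ, |x - y| ≤ κ₀ →
        |u t x - u t y| ≤ h (|x - y|)) ∧
      ∀ t ∈ Ioo (0:ℝ) τ, ∀ x ∈ Ioo (-ℓ) ℓ, |spaceDeriv u t x| ≤ q₁ := by
  intro τ hτ hτT u hsol hbd
  obtain ⟨hreg, hpde, hbc, hu0⟩ := hsol
  have hq0 : 0 ≤ q₀ := hK.trans hKq
  obtain ⟨B, hκpos⟩ := isBarrier_of_continuousOn hq₁ hq0 hψreg.continuousOn hψ1 hq₁int hκ₀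
    hqleft hqright hh
  have hMcl : ∀ t ∈ Icc 0 τ, ∀ x ∈ Icc (-ℓ) ℓ, |u t x| ≤ M := by
    have hcl : closure (Ioo 0 τ ×ˢ Ioo (-ℓ) ℓ) = Icc 0 τ ×ˢ Icc (-ℓ) ℓ := by
      rw [closure_prod_eq, closure_Ioo hτ.ne, closure_Ioo (by linarith)]
    have := MapsTo.closure_of_continuousOn (s := Ioo 0 τ ×ˢ Ioo (-ℓ) ℓ) (t := Iic M)
      (f := fun p : ℝ × ℝ => |u p.1 p.2|) (fun p hp => hbd p.1 hp.1 p.2 hp.2)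
      (by rw [hcl]; exact hreg.1.abs)
    rw [hcl, closure_Iic] at this
    exact fun t ht x hx => this (show (t, x) ∈ Icc 0 τ ×ˢ Icc (-ℓ) ℓ from ⟨ht, hx⟩)
  have hzM : ∀ t ∈ Ioo 0 τ, ∀ x ∈ Icc (-ℓ) ℓ, u t x ∈ Icc (-M) M := fun t ht x hx =>
    abs_le.1 (hMcl t ⟨ht.1.le, ht.2.le⟩ x hx)
  have hrm : ℓ ∈ Icc (-ℓ) ℓ := ⟨by linarith, le_rfl⟩
  have hlm : -ℓ ∈ Icc (-ℓ) ℓ := ⟨le_rfl, by linarith⟩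
  have H : DiffIneq τ ℓ q₀ ψ u := by
    refine ⟨hreg, fun t ht x hx => ?_, fun t ht hp => ?_, fun t ht hp => ?_, fun t ht hp => ?_,
      fun t ht hp => ?_⟩
    · have htT : t ∈ Icc 0 T := ⟨ht.1.le, ht.2.le.trans hτT⟩
      have hxI : x ∈ Icc (-ℓ) ℓ := ⟨hx.1.le, hx.2.le⟩
      refine ⟨a t x (u t x) (spaceDeriv u t x), hapos t htT x hxI _ _, ?_⟩
      rw [hpde t ht x hx]
      exact hfa t htT x hxI _ (hzM t ht x hxI) _
    · have := (hbg t ⟨ht.1, ht.2.le.trans hτT⟩ _ (hzM t ht ℓ hrm) _ hp).1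
      linarith [(hbc t ht).1]
    · have := (hbg t ⟨ht.1, ht.2.le.trans hτT⟩ _ (hzM t ht ℓ hrm) _ (le_neg_of_le_neg hp)).2.1
      rw [neg_neg] at this
      linarith [(hbc t ht).1]
    · have := (hbg t ⟨ht.1, ht.2.le.trans hτT⟩ _ (hzM t ht (-ℓ) hlm) _ hp).2.2.1
      linarith [(hbc t ht).2]
    · have := (hbg t ⟨ht.1, ht.2.le.trans hτT⟩ _ (hzM t ht (-ℓ) hlm) _
        (le_neg_of_le_neg hp)).2.2.2
      rw [neg_neg] at this
      linarith [(hbc t ht).2]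
  have hinit : ∀ x ∈ Icc (-ℓ) ℓ, ∀ y ∈ Icc (-ℓ) ℓ, x - y ∈ Icc 0 κ₀ →
      |u 0 x - u 0 y| ≤ q₀ * (x - y) := by
    intro x hx y hy hs
    rw [hu0 x hx, hu0 y hy]
    refine (hLip x hx y hy).trans ?_
    rw [abs_of_nonneg hs.1]
    exact mul_le_mul_of_nonneg_right hKq hs.1
  have hpair : ∀ t ∈ Icc (0:ℝ) τ, ∀ x ∈ Icc (-ℓ) ℓ, ∀ y ∈ Icc (-ℓ) ℓ, x - y ∈ Icc 0 κ₀ →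
      |u t x - u t y| ≤ h (x - y) := by
    intro t ht x hx y hy hs
    have h1 := H.sub_le B hq0 hτ hMcl
      (fun x hx y hy hs => (abs_le.1 (hinit x hx y hy hs)).2) ht hx hy hs
    have h2 := H.neg.sub_le B hq0 hτ (fun t ht x hx => by rw [abs_neg]; exact hMcl t ht x hx)
      (fun x hx y hy hs => by linarith [(abs_le.1 (hinit x hx y hy hs)).1]) ht hx hy hs
    exact abs_le.2 ⟨by linarith, h1⟩
  have hmod : ∀ t ∈ Icc (0:ℝ) τ, ∀ x ∈ Icc (-ℓ) ℓ, ∀ y ∈ Icc (-ℓ) ℓ, |x - y| ≤ κ₀ →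
      |u t x - u t y| ≤ h (|x - y|) := by
    intro t ht x hx y hy hs
    rcases le_total y x with hle | hle
    · rw [abs_of_nonneg (sub_nonneg.2 hle)] at hs ⊢
      exact hpair t ht x hx y hy ⟨sub_nonneg.2 hle, hs⟩
    · rw [abs_sub_comm x y, abs_of_nonneg (sub_nonneg.2 hle)] at hs
      rw [abs_sub_comm x y, abs_of_nonneg (sub_nonneg.2 hle), abs_sub_comm]
      exact hpair t ht y hy x hx ⟨sub_nonneg.2 hle, hs⟩
  refine ⟨hmod, fun t ht x hx => ?_⟩
  have hd : HasDerivAt (fun y => u t y) (spaceDeriv u t x) x :=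
    (hreg.2.1 t ht x hx).2.1.hasDerivAt
  refine hd.le_of_lip' (hq0.trans hq₁.le) ?_
  filter_upwards [Ioo_mem_nhds hx.1 hx.2, Metric.closedBall_mem_nhds x hκpos] with y hy hyx
  rw [Metric.mem_closedBall, Real.dist_eq] at hyx
  exact (hmod t ⟨ht.1.le, ht.2.le⟩ y ⟨hy.1.le, hy.2.le⟩ x ⟨hx.1.le, hx.2.le⟩ hyx).trans
    (B.upper _ ⟨abs_nonneg _, hyx⟩)
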